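/- The sequence {f_n} of iterated 3-majority functions with stride 1, where f_n : {-1,1}^{2n+1} → {-1,1} is computed on the graph G_n^{(1)} by setting layer-0 values to the input bits ω(−n),...,ω(n), recursively f(v_{t,i}) = maj(f(v_{t−1,i−1}), f(v_{t−1,i}), f(v_{t−1,i+1})) for |i| ≤ n−t, and f_n(ω) = f(v_{n,0}), is noise stable: lim_{ε→0} sup_n P(f_n(ω) ≠ f_n(ω^ε)) = 0. -/

import Mathlib

open Finset

noncomputable section

/-- The joint probability of the pair `(ω, ω^ε)`, where `ω` is uniform on `{-1,1}^m` and
`ω^ε` flips each bit of `ω` independently with probability `ε`. -/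
def pairWeight (m : ℕ) (ε : ℝ) (ω η : Fin m → Bool) : ℝ :=
  (1 / 2) ^ m * ∏ i, (if ω i = η i then 1 - ε else ε)

/-- Expectation of `F ω ω^ε` over the correlated pair `(ω, ω^ε)`. -/
def pairMean (m : ℕ) (ε : ℝ) (F : (Fin m → Bool) → (Fin m → Bool) → ℝ) : ℝ :=
  ∑ ω, ∑ η, pairWeight m ε ω η * F ω η

/-- `P_{ω,ω^ε}(f(ω) ≠ f(ω^ε))` for a fixed Boolean function `f`. -/
def disagreeProb (m : ℕ) (ε : ℝ) (f : (Fin m → Bool) → Bool) : ℝ :=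
  pairMean m ε (fun ω η => if f ω = f η then 0 else 1)

/-- Majority of three Boolean values. -/
def maj (a b c : Bool) : Bool := (a && b) || (a && c) || (b && c)

/-- The value of node `v_{t,i}` in the stride-1 convolutional iterated 3-majority network
`G_n^{(1)}` with input row `ω` (indexed by `ℤ`). -/
def tval (ω : ℤ → Bool) : ℕ → ℤ → Bool
  | 0, i => ω i
  | t + 1, i => maj (tval ω t (i - 1)) (tval ω t i) (tval ω t (i + 1))

/-- Reindexing of an input vector `ω ∈ {-1,1}^{2n+1}` (coordinates `0,...,2n`) as the row
`ω(-n),...,ω(n)` of input bits of `G_n^{(1)}`. -/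
def extend (n : ℕ) (ω : Fin (2 * n + 1) → Bool) : ℤ → Bool := fun i =>
  if h : 0 ≤ i + n ∧ i + n < 2 * n + 1 then ω ⟨(i + n).toNat, by omega⟩ else false

/-- The iterated 3-majority function with stride 1 on `2n+1` input bits. -/
def iterMaj1 (n : ℕ) (ω : Fin (2 * n + 1) → Bool) : Bool := tval (extend n ω) n 0

lemma sum_prod_fn (m : ℕ) (g : Fin m → Bool → ℝ) :
    ∑ η : Fin m → Bool, ∏ k, g k (η k) = ∏ k, (g k true + g k false) := by
  have h := Finset.prod_univ_sum (fun _ : Fin m => (Finset.univ : Finset Bool)) g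
  rw [Fintype.piFinset_univ] at h
  rw [← h]
  simp

lemma pairMean_mono (m : ℕ) (ε : ℝ) (h0 : 0 ≤ ε) (h1 : ε ≤ 1)
    (F G : (Fin m → Bool) → (Fin m → Bool) → ℝ) (h : ∀ ω η, F ω η ≤ G ω η) :
    pairMean m ε F ≤ pairMean m ε G := by
  unfold pairMean pairWeight
  refine Finset.sum_le_sum fun ω _ => Finset.sum_le_sum fun η _ => ?_
  refine mul_le_mul_of_nonneg_left (h ω η) ?_
  refine mul_nonneg (by positivity) (Finset.prod_nonneg fun i _ => ?_)
  split_ifs <;> linarith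

lemma pairMean_add (m : ℕ) (ε : ℝ) (F G : (Fin m → Bool) → (Fin m → Bool) → ℝ) :
    pairMean m ε (fun ω η => F ω η + G ω η) = pairMean m ε F + pairMean m ε G := by
  simp only [pairMean, mul_add, Finset.sum_add_distrib]

lemma pairMean_sum (m : ℕ) (ε : ℝ) (S : Finset (Fin m))
    (F : Fin m → (Fin m → Bool) → (Fin m → Bool) → ℝ) :
    pairMean m ε (fun ω η => ∑ i ∈ S, F i ω η) = ∑ i ∈ S, pairMean m ε (F i) := by
  simp only [pairMean, Finset.mul_sum]
  rw [Finset.sum_comm (s := S)]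
  refine Finset.sum_congr rfl fun ω _ => ?_
  rw [Finset.sum_comm]

lemma pairMean_neq (m : ℕ) (ε : ℝ) (i : Fin m) :
    pairMean m ε (fun ω η => if ω i = η i then 0 else 1) = ε := by
  unfold pairMean pairWeight
  have key : ∀ ω : Fin m → Bool, ∑ η : Fin m → Bool,
      ((1 / 2 : ℝ) ^ m * ∏ k, (if ω k = η k then 1 - ε else ε)) *
        (if ω i = η i then 0 else 1) = (1 / 2 : ℝ) ^ m * ε := by
    intro ω
    have h := sum_prod_fn m (fun k b => (if ω k = b then 1 - ε else ε) *
      (if k = i then (if ω k = b then 0 else 1) else 1))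
    have h2 : ∏ k, (((if ω k = true then 1 - ε else ε) *
      (if k = i then (if ω k = true then (0:ℝ) else 1) else 1)) +
      ((if ω k = false then 1 - ε else ε) *
      (if k = i then (if ω k = false then (0:ℝ) else 1) else 1))) = ε := by
      have : ∀ k, (((if ω k = true then 1 - ε else ε) *
      (if k = i then (if ω k = true then (0:ℝ) else 1) else 1)) +
      ((if ω k = false then 1 - ε else ε) *
      (if k = i then (if ω k = false then (0:ℝ) else 1) else 1))) = if k = i then ε else 1 := by
        intro k
        by_cases hk : k = i <;> cases hω : ω k <;> simp [hk]
      simp only [this]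
      simp
    rw [h2] at h
    refine Eq.trans ?_ (congrArg (fun x => (1 / 2 : ℝ) ^ m * x) h)
    rw [Finset.mul_sum]
    refine Finset.sum_congr rfl fun η _ => ?_
    rw [Finset.prod_mul_distrib, mul_assoc]
    simp
  simp only [key]
  simp

lemma pairMean_pat (m : ℕ) (ε : ℝ) (S : Finset (Fin m)) (p : Fin m → Bool) :
    pairMean m ε (fun ω _ => if ∀ k ∈ S, ω k = p k then 1 else 0) = (1 / 2) ^ S.card := by
  unfold pairMean pairWeight
  have key : ∀ ω : Fin m → Bool, ∑ η : Fin m → Bool,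
      ((1 / 2 : ℝ) ^ m * ∏ k, (if ω k = η k then 1 - ε else ε)) *
        (if ∀ k ∈ S, ω k = p k then 1 else 0) =
      ∏ k, ((1 / 2 : ℝ) * if k ∈ S then (if ω k = p k then 1 else 0) else 1) := by
    intro ω
    have h := sum_prod_fn m (fun k b => (if ω k = b then 1 - ε else ε))
    have h2 : ∏ k, ((if ω k = true then 1 - ε else ε) + (if ω k = false then 1 - ε else ε))
        = 1 := by
      refine Finset.prod_eq_one fun k _ => ?_
      cases ω k <;> simp
    rw [h2] at h
    rw [← Finset.sum_mul, ← Finset.mul_sum, h, Finset.prod_mul_distrib]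
    have h3 : (∏ k, if k ∈ S then (if ω k = p k then (1:ℝ) else 0) else 1)
        = if ∀ k ∈ S, ω k = p k then 1 else 0 := by
      rw [Finset.prod_ite_mem, Finset.univ_inter]
      split_ifs with hS
      · exact Finset.prod_eq_one fun k hk => by simp [hS k hk]
      · push Not at hS
        obtain ⟨k, hk, hne⟩ := hS
        exact Finset.prod_eq_zero hk (by simp [hne])
    rw [h3]
    simp
  simp only [key]
  rw [sum_prod_fn m (fun k b => (1 / 2 : ℝ) * if k ∈ S then (if b = p k then 1 else 0) else 1)]
  have : ∀ k : Fin m, ((1 / 2 : ℝ) * (if k ∈ S then (if true = p k then 1 else 0) else 1)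
     + (1 / 2 : ℝ) * (if k ∈ S then (if false = p k then 1 else 0) else 1))
     = if k ∈ S then 1 / 2 else 1 := by
    intro k
    by_cases hk : k ∈ S <;> cases p k <;> simp [hk] <;> norm_num
  simp only [this]
  rw [Finset.prod_ite_mem, Finset.univ_inter, Finset.prod_const]

lemma maj_left (a b : Bool) : maj a a b = a := by cases a <;> cases b <;> rfl
lemma maj_right (a b : Bool) : maj b a a = a := by cases a <;> cases b <;> rfl

lemma frozen (ω : ℤ → Bool) (j : ℤ) (h : ω j = ω (j + 1)) (t : ℕ) :
    tval ω t j = ω j ∧ tval ω t (j + 1) = ω j := by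
  induction t with
  | zero => exact ⟨rfl, h.symm⟩
  | succ t ih =>
    constructor
    · simp only [tval]
      rw [ih.1, ih.2, maj_right]
    · simp only [tval]
      rw [show j + 1 - 1 = j by ring, ih.1, ih.2, maj_left]

lemma barrier (ω η : ℤ → Bool) (a b : ℤ) (hab : a + 1 ≤ b)
    (ha : ω a = ω (a + 1)) (hb : ω b = ω (b + 1))
    (h : ∀ i, a ≤ i → i ≤ b + 1 → ω i = η i) (t : ℕ) :
    ∀ i, a + 1 ≤ i → i ≤ b → tval ω t i = tval η t i := by
  have ha' : η a = η (a + 1) := by rw [← h a (by omega) (by omega), ← h (a + 1) (by omega) (by omega), ha]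
  have hb' : η b = η (b + 1) := by rw [← h b (by omega) (by omega), ← h (b + 1) (by omega) (by omega), hb]
  induction t with
  | zero => intro i h1 h2; exact h i (by omega) (by omega)
  | succ t ih =>
    intro i h1 h2
    rcases eq_or_lt_of_le h1 with h1 | h1
    · subst h1
      rw [(frozen ω a ha _).2, (frozen η a ha' _).2]
      exact h a (by omega) (by omega)
    rcases eq_or_lt_of_le h2 with h2 | h2
    · subst h2
      rw [(frozen ω i hb _).1, (frozen η i hb' _).1]
      exact h i (by omega) (by omega)
    simp only [tval]
    rw [ih (i - 1) (by omega) (by omega), ih i (by omega) (by omega), ih (i + 1) (by omega) (by omega)]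

lemma alt (g : ℕ → Bool) (R : ℕ) (h : ∀ j < R, g j ≠ g (j + 1)) :
    ∀ j ≤ R, g j = xor (g 0) (decide (j % 2 = 1)) := by
  intro j
  induction j with
  | zero => simp
  | succ j ih =>
    intro hj
    have h1 := ih (by omega)
    have h2 := h j (by omega)
    rcases Nat.mod_two_eq_zero_or_one j with hm | hm
    · have hm' : (j + 1) % 2 = 1 := by omega
      rw [h1] at h2
      simp only [hm, hm'] at h2 ⊢
      revert h2
      cases g 0 <;> cases g (j + 1) <;> simp
    · have hm' : (j + 1) % 2 = 0 := by omega
      rw [h1] at h2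
      simp only [hm, hm'] at h2 ⊢
      revert h2
      cases g 0 <;> cases g (j + 1) <;> simp

def winR (n R : ℕ) : Finset (Fin (2 * n + 1)) :=
  Finset.univ.filter fun k => n ≤ k.val ∧ k.val ≤ n + R
def winL (n R : ℕ) : Finset (Fin (2 * n + 1)) :=
  Finset.univ.filter fun k => n ≤ k.val + R ∧ k.val ≤ n
def pat (n : ℕ) (b : Bool) (k : Fin (2 * n + 1)) : Bool :=
  xor b (decide (((k.val : ℤ) - n).natAbs % 2 = 1))

lemma winR_card_le (n R : ℕ) : (winR n R).card ≤ R + 1 := by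
  have := Finset.card_le_card_of_injOn (s := winR n R) (t := Finset.Icc n (n + R)) Fin.val
    (by intro k hk; simpa [winR] using hk) (Fin.val_injective.injOn)
  simp at this
  omega

lemma winL_card_le (n R : ℕ) : (winL n R).card ≤ R + 1 := by
  have := Finset.card_le_card_of_injOn (s := winL n R) (t := Finset.Icc (n - R) n) Fin.val
    (by intro k hk; simp [winL] at hk ⊢; omega) (Fin.val_injective.injOn)
  simp at this
  omega

lemma winR_card_ge (n R : ℕ) (h : R ≤ n) : R + 1 ≤ (winR n R).card := by
  have := Finset.card_le_card_of_surjOn (s := winR n R) (t := Finset.Icc n (n + R)) Fin.val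
    (by intro k hk; simp at hk; exact ⟨⟨k, by omega⟩, by simp [winR]; omega, rfl⟩)
  simp at this
  omega

lemma winL_card_ge (n R : ℕ) (h : R ≤ n) : R + 1 ≤ (winL n R).card := by
  have := Finset.card_le_card_of_surjOn (s := winL n R) (t := Finset.Icc (n - R) n) Fin.val
    (by intro k hk; simp at hk; exact ⟨⟨k, by omega⟩, by simp [winL]; omega, rfl⟩)
  simp at this
  omega

lemma extend_val (n : ℕ) (ω : Fin (2 * n + 1) → Bool) (k : Fin (2 * n + 1)) :
    extend n ω ((k.val : ℤ) - n) = ω k := by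
  have := k.isLt
  unfold extend
  rw [dif_pos (by omega)]
  congr 1
  ext
  simp

lemma det (n R : ℕ) (ω η : Fin (2 * n + 1) → Bool)
    (hR : ∀ k ∈ winR n R, ω k = η k) (hL : ∀ k ∈ winL n R, ω k = η k)
    (pR : n < R ∨ ∀ b, ¬ ∀ k ∈ winR n R, ω k = pat n b k)
    (pL : n < R ∨ ∀ b, ¬ ∀ k ∈ winL n R, ω k = pat n b k) :
    iterMaj1 n ω = iterMaj1 n η := by
  rcases Nat.lt_or_ge n R with hn | hn
  · have : ω = η := by
      funext k
      have := k.isLt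
      rcases le_total n k.val with h | h
      · exact hR k (by simp [winR]; omega)
      · exact hL k (by simp [winL]; omega)
    rw [this]
  have pR := pR.resolve_left (by omega)
  have pL := pL.resolve_left (by omega)
  have eR : ∃ j : ℕ, j < R ∧ extend n ω j = extend n ω (j + 1) := by
    by_contra! hc
    have h := alt (fun j => extend n ω j) R (by intro j hj; simpa using hc j hj)
    refine pR (extend n ω (0 : ℕ)) fun k hk => ?_
    simp only [winR, Finset.mem_filter, Finset.mem_univ, true_and] at hk
    have h1 := h (k.val - n) (by omega)
    rw [show ((k.val - n : ℕ) : ℤ) = (k.val : ℤ) - n by omega, extend_val] at h1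
    rw [h1, pat, show ((k.val : ℤ) - n).natAbs = k.val - n by omega]
  have eL : ∃ j : ℕ, j < R ∧ extend n ω (-j) = extend n ω (-(j + 1)) := by
    by_contra! hc
    have h := alt (fun j => extend n ω (-j)) R (by intro j hj; simpa using hc j hj)
    refine pL (extend n ω (-(0 : ℕ))) fun k hk => ?_
    simp only [winL, Finset.mem_filter, Finset.mem_univ, true_and] at hk
    have h1 := h (n - k.val) (by omega)
    rw [show -((n - k.val : ℕ) : ℤ) = (k.val : ℤ) - n by omega, extend_val] at h1
    rw [h1, pat, show ((k.val : ℤ) - n).natAbs = n - k.val by omega]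
  obtain ⟨j, hj, ej⟩ := eR
  obtain ⟨l, hl, el⟩ := eL
  unfold iterMaj1
  refine barrier _ _ (-(l + 1)) j (by omega) ?_ ej ?_ n 0 (by omega) (by omega)
  · rw [← el]; congr 1; ring
  · intro i h1 h2
    obtain ⟨k, hk⟩ : ∃ k : Fin (2 * n + 1), i = (k.val : ℤ) - n :=
      ⟨⟨(i + n).toNat, by omega⟩, by simp; omega⟩
    rw [hk, extend_val, extend_val]
    rcases le_total n k.val with h | h
    · exact hR k (by simp [winR]; omega)
    · exact hL k (by simp [winL]; omega)

lemma ite_nn (P : Prop) [Decidable P] : (0:ℝ) ≤ if P then 1 else 0 := by split_ifs <;> norm_num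
lemma ite_nn' (P : Prop) [Decidable P] : (0:ℝ) ≤ if P then 0 else 1 := by split_ifs <;> norm_num

lemma disagree_bound (n R : ℕ) (ε : ℝ) (h0 : 0 ≤ ε) (h1 : ε ≤ 1) :
    disagreeProb (2 * n + 1) ε (iterMaj1 n) ≤ 2 * (R + 1) * ε + 4 * (1 / 2) ^ (R + 1) := by
  classical
  have cR : ((winR n R).card : ℝ) ≤ R + 1 := by exact_mod_cast winR_card_le n R
  have cL : ((winL n R).card : ℝ) ≤ R + 1 := by exact_mod_cast winL_card_le n R
  have nnS : ∀ (S : Finset (Fin (2 * n + 1))) (ω η : Fin (2 * n + 1) → Bool),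
      (0:ℝ) ≤ ∑ i ∈ S, (if ω i = η i then 0 else 1) := fun S ω η =>
    Finset.sum_nonneg fun i _ => ite_nn' _
  have geS : ∀ (S : Finset (Fin (2 * n + 1))) (ω η : Fin (2 * n + 1) → Bool),
      (¬ ∀ k ∈ S, ω k = η k) → (1:ℝ) ≤ ∑ i ∈ S, (if ω i = η i then 0 else 1) := by
    intro S ω η h
    push Not at h
    obtain ⟨k, hk, hne⟩ := h
    have := Finset.single_le_sum (f := fun i => if ω i = η i then (0:ℝ) else 1)
      (fun i _ => ite_nn' _) hk
    simpa [hne] using this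
  have eS : ∀ S : Finset (Fin (2 * n + 1)), pairMean (2 * n + 1) ε
      (fun ω η => ∑ i ∈ S, (if ω i = η i then 0 else 1)) = S.card * ε := by
    intro S
    rw [pairMean_sum (2 * n + 1) ε S (fun i ω η => if ω i = η i then 0 else 1)]
    simp [pairMean_neq]
  have b1 : (winR n R).card * ε ≤ (R + 1) * ε := mul_le_mul_of_nonneg_right cR h0
  have b2 : (winL n R).card * ε ≤ (R + 1) * ε := mul_le_mul_of_nonneg_right cL h0
  unfold disagreeProb
  rcases Nat.lt_or_ge n R with hn | hn
  · have := pairMean_mono (2 * n + 1) ε h0 h1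
      (fun ω η => if iterMaj1 n ω = iterMaj1 n η then 0 else 1)
      (fun ω η => (∑ i ∈ winR n R, (if ω i = η i then 0 else 1)) +
        (∑ i ∈ winL n R, (if ω i = η i then 0 else 1))) (by
        intro ω η
        have n1 := nnS (winR n R) ω η
        have n2 := nnS (winL n R) ω η
        by_cases a1 : ∀ k ∈ winR n R, ω k = η k
        · by_cases a2 : ∀ k ∈ winL n R, ω k = η k
          · rw [if_pos (det n R ω η a1 a2 (Or.inl hn) (Or.inl hn))]
            linarith
          · have := geS _ _ _ a2
            split_ifs <;> linarith
        · have := geS _ _ _ a1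
          split_ifs <;> linarith)
    rw [pairMean_add, eS, eS] at this
    have : (0:ℝ) ≤ 4 * (1 / 2) ^ (R + 1) := by positivity
    linarith
  · have := pairMean_mono (2 * n + 1) ε h0 h1
      (fun ω η => if iterMaj1 n ω = iterMaj1 n η then 0 else 1)
      (fun ω η => (((((∑ i ∈ winR n R, (if ω i = η i then 0 else 1)) +
        (∑ i ∈ winL n R, (if ω i = η i then 0 else 1))) +
        (if ∀ k ∈ winR n R, ω k = pat n true k then 1 else 0)) +
        (if ∀ k ∈ winR n R, ω k = pat n false k then 1 else 0)) +
        (if ∀ k ∈ winL n R, ω k = pat n true k then 1 else 0)) +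
        (if ∀ k ∈ winL n R, ω k = pat n false k then 1 else 0)) (by
        intro ω η
        have n1 := nnS (winR n R) ω η
        have n2 := nnS (winL n R) ω η
        have m1 := ite_nn (∀ k ∈ winR n R, ω k = pat n true k)
        have m2 := ite_nn (∀ k ∈ winR n R, ω k = pat n false k)
        have m3 := ite_nn (∀ k ∈ winL n R, ω k = pat n true k)
        have m4 := ite_nn (∀ k ∈ winL n R, ω k = pat n false k)
        have hle : (if iterMaj1 n ω = iterMaj1 n η then (0:ℝ) else 1) ≤ 1 := by
          split_ifs <;> norm_num
        by_cases a1 : ∀ k ∈ winR n R, ω k = η k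
        swap
        · have := geS _ _ _ a1
          linarith
        by_cases a2 : ∀ k ∈ winL n R, ω k = η k
        swap
        · have := geS _ _ _ a2
          linarith
        by_cases c1 : ∀ k ∈ winR n R, ω k = pat n true k
        · rw [if_pos c1] at m1 ⊢; linarith
        by_cases c2 : ∀ k ∈ winR n R, ω k = pat n false k
        · rw [if_pos c2] at m2 ⊢; linarith
        by_cases c3 : ∀ k ∈ winL n R, ω k = pat n true k
        · rw [if_pos c3] at m3 ⊢; linarith
        by_cases c4 : ∀ k ∈ winL n R, ω k = pat n false k
        · rw [if_pos c4] at m4 ⊢; linarith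
        rw [if_pos (det n R ω η a1 a2 (Or.inr (by rintro (_ | _) <;> assumption))
          (Or.inr (by rintro (_ | _) <;> assumption)))]
        linarith)
    simp only [pairMean_add, eS, pairMean_pat] at this
    rw [le_antisymm (winR_card_le n R) (winR_card_ge n R hn),
      le_antisymm (winL_card_le n R) (winL_card_ge n R hn)] at this
    push_cast at this
    linarith

/-- the sequence of iterated 3-majority functions with stride 1 on `G_n^{(1)}` is
noise stable: `lim_{ε→0} sup_n P(f_n(ω) ≠ f_n(ω^ε)) = 0`. -/
theorem iterated_three_majority_stride_one_noise_stable :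
    ∀ δ : ℝ, 0 < δ → ∃ ε₀ : ℝ, 0 < ε₀ ∧ ∀ ε : ℝ, 0 < ε → ε ≤ ε₀ → ∀ n : ℕ,
      disagreeProb (2 * n + 1) ε (iterMaj1 n) < δ := by
  intro δ hδ
  obtain ⟨R, hR⟩ := exists_pow_lt_of_lt_one (show (0:ℝ) < δ / 8 by positivity)
    (show (1 / 2 : ℝ) < 1 by norm_num)
  have hp : (0:ℝ) < 4 * (R + 1) := by positivity
  refine ⟨min 1 (δ / (4 * (R + 1))), lt_min one_pos (by positivity), fun ε h0 hε n => ?_⟩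
  have h := disagree_bound n R ε h0.le (hε.trans (min_le_left _ _))
  have h2 := (le_div_iff₀ hp).1 (hε.trans (min_le_right _ _))
  rw [pow_succ] at h
  nlinarith

end
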